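/- An ELKh_n formula φ0 is satisfiable in some model if and only if the tableau T_{φ0} is not closed (i.e. some complete subtree of T_{φ0} contains no node with a blatantly inconsistent label). -/

import Mathlib

/-!
Formalization of the logic of strategically knowing how (ELKh_n) and of the
tableau procedure for it.
-/

namespace ELKh

/-- Formulas of the language ELKh_n:
`φ ::= ⊥ | p | ¬φ | (φ ∧ φ) | K_i φ | Kh_i φ`. -/
inductive Formula (P I : Type) : Type
  | bot : Formula P I
  | atom : P → Formula P I
  | neg : Formula P I → Formula P I
  | and : Formula P I → Formula P I → Formula P I
  | know : I → Formula P I → Formula P I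
  | kh : I → Formula P I → Formula P I

variable {P I : Type}

/-- Models of ELKh_n: states with equivalence relations `∼ᵢ`, actions for each
agent, a transition relation for each action, and a valuation. -/
structure Model (P I : Type) where
  W : Type
  sim : I → W → W → Prop
  equiv : ∀ i, Equivalence (sim i)
  Act : I → Type
  R : (i : I) → Act i → W → W → Prop
  V : W → P → Prop

/-- Transition between `i`-equivalence classes (classes are represented by
member states): `[s]ⁱ →ₐ [t]ⁱ` iff some `s' ∈ [s]ⁱ`, `t' ∈ [t]ⁱ` have `R a s' t'`. -/
def Model.ctrans (M : Model P I) (i : I) (a : M.Act i) (s t : M.W) : Prop :=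
  ∃ s' t', M.sim i s s' ∧ M.sim i t t' ∧ M.R i a s' t'

/-- Uniformly executable strategies for agent `i`: partial functions from
`∼ᵢ`-equivalence classes to actions of `i` (hence constant on classes), whose
chosen action is executable at every member of the class. -/
structure Strategy (M : Model P I) (i : I) where
  act : M.W → Option (M.Act i)
  congr : ∀ s t, M.sim i s t → act s = act t
  exec : ∀ s a, act s = some a → ∀ t, M.sim i s t → ∃ u, M.R i a t u

namespace Strategy

variable {M : Model P I} {i : I}

/-- The `k`-th step of the sequence of classes `[δ 0][δ 1]⋯` is a σ-step. -/
def Steps (σ : Strategy M i) (δ : ℕ → M.W) (k : ℕ) : Prop :=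
  ∃ a, σ.act (δ k) = some a ∧ M.ctrans i a (δ k) (δ (k+1))

/-- `[δ 0]⋯[δ h]` is a (finite) possible execution of σ. -/
def FinExec (σ : Strategy M i) (δ : ℕ → M.W) (h : ℕ) : Prop :=
  ∀ k < h, σ.Steps δ k

/-- `[δ 0]⋯[δ h]` is a complete finite execution of σ (its end class is not in
the domain of σ). -/
def CompleteFinExec (σ : Strategy M i) (δ : ℕ → M.W) (h : ℕ) : Prop :=
  σ.FinExec δ h ∧ σ.act (δ h) = none

/-- `[δ 0][δ 1]⋯` is an infinite possible execution of σ (such an execution is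
automatically complete). -/
def InfExec (σ : Strategy M i) (δ : ℕ → M.W) : Prop :=
  ∀ k, σ.Steps δ k

end Strategy

/-- Satisfaction for ELKh_n.  `Kh_i φ` holds at `s` iff there is a strategy σ
for `i` such that all complete executions of σ starting from `[s]ⁱ` are finite
(equivalently: there is no infinite execution of σ from `[s]ⁱ`) and every state
of every end class of a complete (finite) execution from `[s]ⁱ` satisfies `φ`. -/
def Sat (M : Model P I) : M.W → Formula P I → Prop
  | _, .bot => False
  | s, .atom p => M.V s p
  | s, .neg φ => ¬ Sat M s φ
  | s, .and φ ψ => Sat M s φ ∧ Sat M s ψ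
  | s, .know i φ => ∀ t, M.sim i s t → Sat M t φ
  | s, .kh i φ => ∃ σ : Strategy M i,
      (∀ δ : ℕ → M.W, M.sim i s (δ 0) → ¬ σ.InfExec δ) ∧
      (∀ (δ : ℕ → M.W) (h : ℕ), M.sim i s (δ 0) → σ.CompleteFinExec δ h →
        ∀ t, M.sim i (δ h) t → Sat M t φ)

/-! ### Subformulas -/

/-- The set of subformulas of a formula. -/
def subf : Formula P I → Set (Formula P I)
  | .bot => {Formula.bot}
  | .atom p => {Formula.atom p}
  | .neg φ => insert (Formula.neg φ) (subf φ)
  | .and φ ψ => insert (Formula.and φ ψ) (subf φ ∪ subf ψ)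
  | .know i φ => insert (Formula.know i φ) (subf φ)
  | .kh i φ => insert (Formula.kh i φ) (subf φ)

/-- `sub⁺(φ₀) = {ψ, ¬ψ : ψ subformula of φ₀} ∪ {Kᵢψ, ¬Kᵢψ : Khᵢψ subformula of φ₀}`. -/
def subPlus (φ0 : Formula P I) : Set (Formula P I) :=
  {χ | ∃ ψ ∈ subf φ0, χ = ψ ∨ χ = Formula.neg ψ} ∪
  {χ | ∃ i ψ, Formula.kh i ψ ∈ subf φ0 ∧
      (χ = Formula.know i ψ ∨ χ = Formula.neg (Formula.know i ψ))}

/-- `∼ψ`:  `∼¬χ = χ`, and `∼ψ = ¬ψ` otherwise. -/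
def simNeg : Formula P I → Formula P I
  | .neg χ => χ
  | ψ => Formula.neg ψ

/-! ### Labeled trees -/

/-- Labels of tableau edges: `ε`, an agent `i`, or an action `a_{Khᵢψ}`. -/
inductive ELabel (P I : Type) : Type
  | eps : ELabel P I
  | ag : I → ELabel P I
  | act : I → Formula P I → ELabel P I

/-- Labeled rooted trees: each node is labeled with a set of formulas, each
non-root node carries the label of the edge connecting it to its parent, and
`blockedBy n = some n'` records that the node `n` is blocked by `n'`. -/
structure LTree (P I : Type) where
  Node : Type
  root : Node
  parent : Node → Option Node
  depth : Node → ℕ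
  label : Node → Set (Formula P I)
  elabel : Node → ELabel P I
  blockedBy : Node → Option Node
  parent_root : parent root = none
  eq_root : ∀ n, parent n = none → n = root
  depth_root : depth root = 0
  depth_parent : ∀ n m, parent n = some m → depth n = depth m + 1

variable (T : LTree P I)

/-- The children of a node. -/
def Children (n : T.Node) : Set T.Node := {m | T.parent m = some n}

/-- A node is a leaf iff it has no children. -/
def IsLeaf (n : T.Node) : Prop := ∀ m, T.parent m ≠ some n

/-- `Ancestor T m n`: `m` is a proper ancestor of `n`. -/
def Ancestor (m n : T.Node) : Prop :=
  Relation.TransGen (fun a b => T.parent b = some a) m n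

/-- `IAnc T i m n`: `m` is an `i`-ancestor of `n`, i.e. a proper ancestor of
`n` connected to `n` by a path all of whose edges are labeled `i` or `ε`. -/
inductive IAnc (i : I) : T.Node → T.Node → Prop
  | single {m n} : T.parent n = some m →
      (T.elabel n = ELabel.eps ∨ T.elabel n = ELabel.ag i) → IAnc i m n
  | cons {m k n} : T.parent n = some k →
      (T.elabel n = ELabel.eps ∨ T.elabel n = ELabel.ag i) →
      IAnc i m k → IAnc i m n

/-! ### The tableau construction -/

/-- A set of formulas is blatantly inconsistent iff it contains `⊥` or some
pair `ψ, ¬ψ`. -/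
def Blatant (Γ : Set (Formula P I)) : Prop :=
  Formula.bot ∈ Γ ∨ ∃ ψ, ψ ∈ Γ ∧ Formula.neg ψ ∈ Γ

/-- `AutoChecked Γ φ` holds iff none of the expansion rules (a)-(g) is
applicable to `φ` in the label `Γ`; such formulas are (and remain) marked
``checked'' by step (h) of the construction. -/
def AutoChecked (Γ : Set (Formula P I)) : Formula P I → Prop
  | .neg (.neg ψ) => ψ ∈ Γ
  | .and ψ χ => ψ ∈ Γ ∧ χ ∈ Γ
  | .neg (.and ψ χ) =>
      (Formula.neg ψ ∈ Γ ∧ Formula.neg χ ∈ Γ) ∨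
      (Formula.neg ψ ∈ Γ ∧ χ ∈ Γ) ∨ (ψ ∈ Γ ∧ Formula.neg χ ∈ Γ)
  | .know _ ψ => ψ ∈ Γ
  | .neg (.know _ ψ) => Formula.neg ψ ∈ Γ ∨ ψ ∈ Γ
  | .kh i ψ => Formula.neg (Formula.know i ψ) ∈ Γ ∨ Formula.know i ψ ∈ Γ
  | .neg (.kh i ψ) => Formula.neg (Formula.know i ψ) ∈ Γ
  | _ => True

/-- All formulas of `Γ` are checked; nodes with such labels are the ``and''
nodes (expanded by step (2)), the remaining expanded nodes are ``or'' nodes. -/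
def Saturated (Γ : Set (Formula P I)) : Prop := ∀ φ ∈ Γ, AutoChecked Γ φ

/-- The labels of the children created when one of the rules (a)-(g) processes
the formula `φ` at a node labeled `Γ`. -/
def orOut (Γ : Set (Formula P I)) : Formula P I → Set (Set (Formula P I))
  | .neg (.neg ψ) => {insert ψ Γ}
  | .and ψ χ => {insert ψ (insert χ Γ)}
  | .neg (.and ψ χ) =>
      {insert (Formula.neg ψ) (insert (Formula.neg χ) Γ),
       insert (Formula.neg ψ) (insert χ Γ),
       insert ψ (insert (Formula.neg χ) Γ)}
  | .know _ ψ => {insert ψ Γ}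
  | .neg (.know _ ψ) => {insert (Formula.neg ψ) Γ, insert ψ Γ}
  | .kh i ψ =>
      {insert (Formula.neg (Formula.know i ψ)) Γ, insert (Formula.know i ψ) Γ}
  | .neg (.kh i ψ) => {insert (Formula.neg (Formula.know i ψ)) Γ}
  | _ => ∅

/-- `Σ(n,¬Kᵢψ) = {¬ψ} ∪ Γ|Kᵢ ∪ Γ|¬Kᵢ ∪ Γ|Khᵢ ∪ Γ|¬Khᵢ` where `Γ = L(n)`. -/
def SigmaSet (Γ : Set (Formula P I)) (i : I) (ψ : Formula P I) :
    Set (Formula P I) :=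
  insert (Formula.neg ψ)
    {φ ∈ Γ | (∃ χ, φ = Formula.know i χ) ∨ (∃ χ, φ = Formula.neg (Formula.know i χ)) ∨
             (∃ χ, φ = Formula.kh i χ) ∨ (∃ χ, φ = Formula.neg (Formula.kh i χ))}

/-- Expansion condition for ``or'' nodes (step (1), rules (a)-(g)): some
unchecked formula of the label is processed and the children of the node are
exactly the prescribed `ε`-children. -/
def OrNodeCond (n : T.Node) : Prop :=
  ∃ φ ∈ T.label n, ¬ AutoChecked (T.label n) φ ∧
    (∀ Δ ∈ orOut (T.label n) φ,
      ∃ m, T.parent m = some n ∧ T.elabel m = ELabel.eps ∧ T.label m = Δ ∧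
        T.blockedBy m = none) ∧
    (∀ m, T.parent m = some n →
      T.elabel m = ELabel.eps ∧ T.label m ∈ orOut (T.label n) φ ∧
        T.blockedBy m = none)

/-- Expansion condition for ``and'' nodes (step (2), rules (i), (j), (k)): the
children of the node are exactly those prescribed by the three rules, and a
(k)-child is blocked iff some ancestor carries the same label. -/
def AndNodeCond (n : T.Node) : Prop :=
  (∀ i ψ, Formula.neg (Formula.know i ψ) ∈ T.label n →
    ¬ (∃ n', IAnc T i n' n ∧ T.label n' = SigmaSet (T.label n) i ψ) →
    ∃ m, T.parent m = some n ∧ T.elabel m = ELabel.ag i ∧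
      T.label m = SigmaSet (T.label n) i ψ ∧ T.blockedBy m = none) ∧
  (∀ i ψ, Formula.kh i ψ ∈ T.label n → Formula.neg (Formula.know i ψ) ∈ T.label n →
    ∃ m, T.parent m = some n ∧ T.elabel m = ELabel.act i ψ ∧
      T.label m = {Formula.know i ψ} ∧ T.blockedBy m = none) ∧
  (∀ i ψ χ, Formula.neg (Formula.kh i χ) ∈ T.label n →
    Formula.kh i ψ ∈ T.label n → Formula.neg (Formula.know i ψ) ∈ T.label n →
    ∃ m, T.parent m = some n ∧ T.elabel m = ELabel.act i ψ ∧
      T.label m = {Formula.know i ψ, Formula.neg (Formula.kh i χ)} ∧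
      ((∃ n', Ancestor T n' m ∧ T.label n' = T.label m) ↔ T.blockedBy m ≠ none)) ∧
  (∀ m, T.parent m = some n →
    (∃ i ψ, T.elabel m = ELabel.ag i ∧ Formula.neg (Formula.know i ψ) ∈ T.label n ∧
      T.label m = SigmaSet (T.label n) i ψ ∧
      ¬ (∃ n', IAnc T i n' n ∧ T.label n' = SigmaSet (T.label n) i ψ)) ∨
    (∃ i ψ, T.elabel m = ELabel.act i ψ ∧ Formula.kh i ψ ∈ T.label n ∧
      Formula.neg (Formula.know i ψ) ∈ T.label n ∧
      T.label m = {Formula.know i ψ}) ∨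
    (∃ i ψ χ, T.elabel m = ELabel.act i ψ ∧ Formula.neg (Formula.kh i χ) ∈ T.label n ∧
      Formula.kh i ψ ∈ T.label n ∧ Formula.neg (Formula.know i ψ) ∈ T.label n ∧
      T.label m = {Formula.know i ψ, Formula.neg (Formula.kh i χ)}))

/-- `T` is a tableau for `φ₀`: the root is labeled `{φ₀}`, blocked nodes are
blocked by an ancestor with the same label, blocked nodes and blatantly
inconsistent nodes are leaves, and every other node is expanded according to
step (1) (``or'' nodes) or step (2) (``and'' nodes) of the construction. -/
structure IsTableau (φ0 : Formula P I) (T : LTree P I) : Prop where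
  root_label : T.label T.root = {φ0}
  blocked_spec : ∀ n n', T.blockedBy n = some n' →
    Ancestor T n' n ∧ T.label n' = T.label n
  blocked_leaf : ∀ n, T.blockedBy n ≠ none → IsLeaf T n
  blatant_leaf : ∀ n, Blatant (T.label n) → IsLeaf T n
  or_node : ∀ n, ¬ Blatant (T.label n) → T.blockedBy n = none →
    ¬ Saturated (T.label n) → OrNodeCond T n
  and_node : ∀ n, ¬ Blatant (T.label n) → T.blockedBy n = none →
    Saturated (T.label n) → AndNodeCond T n

/-! ### Subtrees -/

/-- A subtree: a set of nodes containing the root and closed under parents. -/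
def IsSubtree (S : Set T.Node) : Prop :=
  T.root ∈ S ∧ ∀ n ∈ S, ∀ m, T.parent n = some m → m ∈ S

/-- A complete subtree: it contains the root, all children of each of its
``and'' non-leaf nodes, and at least one child of each of its ``or'' non-leaf
nodes. -/
def CompleteSubtree (S : Set T.Node) : Prop :=
  IsSubtree T S ∧
  (∀ n ∈ S, ¬ IsLeaf T n → Saturated (T.label n) → ∀ m ∈ Children T n, m ∈ S) ∧
  (∀ n ∈ S, ¬ IsLeaf T n → ¬ Saturated (T.label n) → ∃ m ∈ Children T n, m ∈ S)

/-- A subtree is closed iff some of its nodes has a blatantly inconsistent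
label; otherwise it is open. -/
def ClosedSubtree (S : Set T.Node) : Prop := ∃ n ∈ S, Blatant (T.label n)

/-- A tableau is closed iff all its complete subtrees are closed. -/
def TableauClosed : Prop := ∀ S : Set T.Node, CompleteSubtree T S → ClosedSubtree T S

/-! ### Maximal ε-paths and the induced model -/

/-- An `ε`-edge from `m` down to `n` inside the node set `S`. -/
def EpsStep (S : Set T.Node) (m n : T.Node) : Prop :=
  m ∈ S ∧ n ∈ S ∧ T.parent n = some m ∧ T.elabel n = ELabel.eps

/-- `n` is an `ε`-descendant of `m` inside `S` (reflexive-transitive). -/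
def EpsDesc (S : Set T.Node) : T.Node → T.Node → Prop :=
  Relation.ReflTransGen (EpsStep T S)

/-- A maximal `ε`-path of the subtree with node set `S`, recorded by its
initial node `top` and its end node `bot`.  Its label is `T.label bot`. -/
structure MaxEpsPath (T : LTree P I) (S : Set T.Node) where
  top : T.Node
  bot : T.Node
  top_mem : top ∈ S
  bot_mem : bot ∈ S
  desc : EpsDesc T S top bot
  top_max : ∀ m, ¬ EpsStep T S m top
  bot_max : ∀ m, ¬ EpsStep T S bot m

/-- The states of the induced model: non-blocked maximal `ε`-paths. -/
def PathW (T : LTree P I) (S : Set T.Node) : Type :=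
  {ρ : MaxEpsPath T S // T.blockedBy ρ.bot = none}

/-- `ρ₂` is an `i`-child path of `ρ₁`: `ρ₁ρ₂` is a path whose connecting edge
is labeled `i`. -/
def ISimStep (S : Set T.Node) (i : I) (ρ1 ρ2 : PathW T S) : Prop :=
  T.parent ρ2.1.top = some ρ1.1.bot ∧ T.elabel ρ2.1.top = ELabel.ag i

/-- The node `n'` lies on the maximal `ε`-path `ρ`. -/
def OnPath (S : Set T.Node) (ρ : MaxEpsPath T S) (n' : T.Node) : Prop :=
  EpsDesc T S ρ.top n' ∧ EpsDesc T S n' ρ.bot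

/-- The model `M^T` induced by the (complete) subtree with node set `S`:
states are the non-blocked maximal `ε`-paths, `∼ᵢ` is the least equivalence
relation containing the `i`-edge steps, actions of agent `i` are the actions
`a_{Khᵢψ}` labeling edges of the subtree, `(ρ, ρ') ∈ R_a` iff there is an
`a`-edge from the end of `ρ` to the start of a maximal `ε`-path `ρ''` where
`ρ'' = ρ'` or `ρ''` is blocked by a node lying on `ρ'`, and `ρ ∈ V(p)` iff
`p ∈ L(ρ)`. -/
def inducedModel (T : LTree P I) (S : Set T.Node) : Model P I where
  W := PathW T S
  sim := fun i => Relation.EqvGen (ISimStep T S i)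
  equiv := fun _ => Relation.EqvGen.is_equivalence _
  Act := fun i => {ψ : Formula P I // ∃ m n, m ∈ S ∧ n ∈ S ∧
    T.parent m = some n ∧ T.elabel m = ELabel.act i ψ}
  R := fun i a ρ1 ρ2 => ∃ ρ'' : MaxEpsPath T S,
    T.parent ρ''.top = some ρ1.1.bot ∧ T.elabel ρ''.top = ELabel.act i a.1 ∧
    (ρ'' = ρ2.1 ∨ ∃ n', T.blockedBy ρ''.bot = some n' ∧ OnPath T S ρ2.1 n')
  V := fun ρ p => Formula.atom p ∈ T.label ρ.1.bot

/-- `L(ρ)|Kᵢ`: the `Kᵢ`-formulas of `Γ`. -/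
def projK (i : I) (Γ : Set (Formula P I)) : Set (Formula P I) :=
  {φ ∈ Γ | ∃ ψ, φ = Formula.know i ψ}

/-- `L(ρ)|¬Kᵢ`: the `¬Kᵢ`-formulas of `Γ`. -/
def projNK (i : I) (Γ : Set (Formula P I)) : Set (Formula P I) :=
  {φ ∈ Γ | ∃ ψ, φ = Formula.neg (Formula.know i ψ)}

/-- `L(ρ)|Khᵢ`: the `Khᵢ`-formulas of `Γ`. -/
def projKh (i : I) (Γ : Set (Formula P I)) : Set (Formula P I) :=
  {φ ∈ Γ | ∃ ψ, φ = Formula.kh i ψ}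

/-- `L(ρ)|¬Khᵢ`: the `¬Khᵢ`-formulas of `Γ`. -/
def projNKh (i : I) (Γ : Set (Formula P I)) : Set (Formula P I) :=
  {φ ∈ Γ | ∃ ψ, φ = Formula.neg (Formula.kh i ψ)}

/-! ### Knowing how as an inductively generated winning region -/

section Win

variable {M : Model P I} {i : I}

/-- All members of the `i`-class of `s` satisfy `Q`. -/
def ClassAll (M : Model P I) (i : I) (Q : M.W → Prop) (s : M.W) : Prop :=
  ∀ t, M.sim i s t → Q t

/-- The action `a` is executable at all members of the `i`-class of `s`. -/
def Executable (M : Model P I) (i : I) (a : M.Act i) (s : M.W) : Prop :=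
  ∀ t, M.sim i s t → ∃ u, M.R i a t u

/-- The states from which agent `i` can force reaching an `i`-class included in `Q`. -/
inductive Win (M : Model P I) (i : I) (Q : M.W → Prop) : M.W → Prop
  | base {s} : ClassAll M i Q s → Win M i Q s
  | step {s} (a : M.Act i) : Executable M i a s →
      (∀ t, M.ctrans i a s t → Win M i Q t) → Win M i Q s

/-- `Win`, with an ordinal bound on the number of actions that are needed. -/
inductive WinRank (M : Model P I) (i : I) (Q : M.W → Prop) : Ordinal.{0} → M.W → Prop
  | base {α s} : ClassAll M i Q s → WinRank M i Q α s
  | step {α s} (a : M.Act i) (f : M.W → Ordinal.{0}) : Executable M i a s →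
      (∀ t, M.ctrans i a s t → f t < α) →
      (∀ t, M.ctrans i a s t → WinRank M i Q (f t) t) → WinRank M i Q α s

theorem sim_left_iff {s t : M.W} (h : M.sim i s t) (u : M.W) : M.sim i s u ↔ M.sim i t u :=
  ⟨(M.equiv i).trans ((M.equiv i).symm h), (M.equiv i).trans h⟩

theorem ClassAll.congr {Q : M.W → Prop} {s t : M.W} (h : M.sim i s t) :
    ClassAll M i Q s ↔ ClassAll M i Q t := by
  simp only [ClassAll, sim_left_iff h]

theorem Executable.congr {a : M.Act i} {s t : M.W} (h : M.sim i s t) :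
    Executable M i a s ↔ Executable M i a t := by
  simp only [Executable, sim_left_iff h]

theorem ctrans_congr {a : M.Act i} {s t : M.W} (h : M.sim i s t) (u : M.W) :
    M.ctrans i a s u ↔ M.ctrans i a t u := by
  simp only [Model.ctrans, sim_left_iff h]

theorem Executable.exists_ctrans {a : M.Act i} {s : M.W} (h : Executable M i a s) :
    ∃ t, M.ctrans i a s t := by
  obtain ⟨u, hu⟩ := h s ((M.equiv i).refl s)
  exact ⟨u, s, u, (M.equiv i).refl s, (M.equiv i).refl u, hu⟩

theorem WinRank.congr_left {Q : M.W → Prop} {α : Ordinal} {s t : M.W} (h : M.sim i s t)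
    (hs : WinRank M i Q α s) : WinRank M i Q α t := by
  cases hs with
  | base hs => exact .base ((ClassAll.congr h).1 hs)
  | step a f he hf hw =>
    exact .step a f ((Executable.congr h).1 he) (fun u hu => hf u ((ctrans_congr h u).2 hu))
      (fun u hu => hw u ((ctrans_congr h u).2 hu))

theorem WinRank.congr {Q : M.W → Prop} {α : Ordinal} {s t : M.W} (h : M.sim i s t) :
    WinRank M i Q α s ↔ WinRank M i Q α t :=
  ⟨.congr_left h, .congr_left ((M.equiv i).symm h)⟩

theorem Win.exists_winRank {Q : M.W → Prop} {s : M.W} (h : Win M i Q s) :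
    ∃ α, WinRank M i Q α s := by
  induction h with
  | base hs => exact ⟨0, .base hs⟩
  | step a he _ ih =>
    choose! f hf using ih
    exact ⟨Order.succ (⨆ t, f t), .step a f he
      (fun t _ => Order.lt_succ_of_le (Ordinal.le_iSup f t)) hf⟩

/-- The least ordinal bound for a state of the winning region. -/
noncomputable def rank (M : Model P I) (i : I) (Q : M.W → Prop) (s : M.W) : Ordinal.{0} :=
  sInf {α | WinRank M i Q α s}

/-- The action `a` makes progress towards an `i`-class included in `Q`. -/
def Progress (M : Model P I) (i : I) (Q : M.W → Prop) (s : M.W) (a : M.Act i) : Prop :=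
  Executable M i a s ∧ ∀ t, M.ctrans i a s t →
    (∃ α, WinRank M i Q α t) ∧ rank M i Q t < rank M i Q s

theorem Progress.congr {Q : M.W → Prop} {s t : M.W} (h : M.sim i s t) :
    Progress M i Q s = Progress M i Q t := by
  funext a
  have hr : rank M i Q s = rank M i Q t := by simp only [rank, WinRank.congr h]
  simp only [Progress, Executable.congr h, ctrans_congr h, hr]

theorem exists_progress {Q : M.W → Prop} {s : M.W} (h : ∃ α, WinRank M i Q α s)
    (hs : ¬ ClassAll M i Q s) : ∃ a, Progress M i Q s a := by
  have hr : WinRank M i Q (rank M i Q s) s := csInf_mem h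
  cases hr with
  | base h' => exact absurd h' hs
  | step a f he hf hw =>
    exact ⟨a, he, fun t ht => ⟨⟨_, hw t ht⟩,
      (csInf_le' (s := {α | WinRank M i Q α t}) (hw t ht)).trans_lt (hf t ht)⟩⟩

open Classical in
/-- The strategy that always makes progress. -/
noncomputable def progressStrategy (M : Model P I) (i : I) (Q : M.W → Prop) : Strategy M i where
  act s := if h : ∃ a, Progress M i Q s a then some h.choose else none
  congr s t h := by rw [Progress.congr h]
  exec s a h := by
    split_ifs at h with h'
    obtain rfl := Option.some.inj h
    exact h'.choose_spec.1

theorem progressStrategy_act {Q : M.W → Prop} {s : M.W} {a : M.Act i}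
    (h : (progressStrategy M i Q).act s = some a) : Progress M i Q s a := by
  simp only [progressStrategy] at h
  split_ifs at h with h'
  obtain rfl := Option.some.inj h
  exact h'.choose_spec

theorem not_progress_of_act_eq_none {Q : M.W → Prop} {s : M.W}
    (h : (progressStrategy M i Q).act s = none) : ¬ ∃ a, Progress M i Q s a := by
  simp only [progressStrategy] at h
  split_ifs at h with h'
  exact h'

theorem exists_finExec {σ : Strategy M i} {s u : M.W}
    (h : Relation.ReflTransGen (fun u v => ∃ a, σ.act u = some a ∧ M.ctrans i a u v) s u) :
    ∃ (δ : ℕ → M.W) (k : ℕ), δ 0 = s ∧ σ.FinExec δ k ∧ δ k = u := by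
  induction h using Relation.ReflTransGen.head_induction_on with
  | refl => exact ⟨fun _ => u, 0, rfl, fun k hk => absurd hk (Nat.not_lt_zero k), rfl⟩
  | @head s v hsv _ ih =>
    obtain ⟨δ, k, rfl, hδ, rfl⟩ := ih
    refine ⟨fun n => n.casesOn s δ, k + 1, rfl, ?_, rfl⟩
    rintro (_ | n) hn
    · exact hsv
    · exact hδ n (Nat.lt_of_succ_lt_succ hn)

theorem sat_kh_iff_win {s : M.W} {φ : Formula P I} :
    Sat M s (.kh i φ) ↔ Win M i (fun t => Sat M t φ) s := by
  constructor
  · rintro ⟨σ, hinf, hend⟩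
    by_contra hs
    let step : M.W → M.W → Prop := fun u v => ∃ a, σ.act u = some a ∧ M.ctrans i a u v
    let X := {u : M.W // Relation.ReflTransGen step s u ∧ ¬ Win M i (fun t => Sat M t φ) u}
    have hnext : ∀ x : X, ∃ y : X, step x.1 y.1 := by
      rintro ⟨u, hu, hw⟩
      cases ha : σ.act u with
      | none =>
        obtain ⟨δ, k, h0, hδ, rfl⟩ := exists_finExec hu
        exact absurd (.base (hend δ k (h0 ▸ (M.equiv i).refl _) ⟨hδ, ha⟩)) hw
      | some a =>
        by_contra hno
        refine hw (.step a (σ.exec u a ha) fun t ht => ?_)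
        by_contra hwt
        exact hno ⟨⟨t, hu.tail ⟨a, ha, ht⟩, hwt⟩, a, ha, ht⟩
    choose f hf using hnext
    let x : ℕ → X := fun n => f^[n] ⟨s, .refl, hs⟩
    refine hinf (fun n => (x n).1) ((M.equiv i).refl s) fun k => ?_
    have hk : x (k + 1) = f (x k) := Function.iterate_succ_apply' f k _
    have := hf (x k)
    rw [← hk] at this
    exact this
  · intro hw
    have h0 := hw.exists_winRank
    refine ⟨progressStrategy M i (fun t => Sat M t φ), fun δ _ hδ => ?_, fun δ k hs hδ => ?_⟩
    · refine not_strictAnti_of_wellFoundedLT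
        (fun n => rank M i (fun t => Sat M t φ) (δ n)) (strictAnti_nat_of_succ_lt fun n => ?_)
      obtain ⟨a, ha, ht⟩ := hδ n
      exact ((progressStrategy_act ha).2 _ ht).2
    · have hk : ∀ n ≤ k, ∃ α, WinRank M i (fun t => Sat M t φ) α (δ n) := by
        intro n hn
        cases n with
        | zero => exact h0.imp fun α => .congr_left hs
        | succ n =>
          obtain ⟨a, ha, ht⟩ := hδ.1 n hn
          exact ((progressStrategy_act ha).2 _ ht).1
      by_contra hne
      exact not_progress_of_act_eq_none hδ.2 (exists_progress (hk k le_rfl) hne)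

theorem Win.of_subset {Q Q' : M.W → Prop} {s : M.W} (h : Win M i Q s)
    (hQ : ∀ t, ClassAll M i Q t → Win M i Q' t) : Win M i Q' s := by
  induction h with
  | base h => exact hQ _ h
  | step a he _ ih => exact .step a he ih

theorem Win.exists_classAll {Q : M.W → Prop} {s : M.W} (h : Win M i Q s) :
    ∃ t, ClassAll M i Q t := by
  induction h with
  | base h => exact ⟨_, h⟩
  | step a he _ ih =>
    obtain ⟨t, ht⟩ := he.exists_ctrans
    exact ih t ht

end Win

/-! ### Soundness -/

/-- The formulas of the form `Kᵢχ`, `¬Kᵢχ`, `Khᵢχ` or `¬Khᵢχ`. -/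
def IsAgentFormula (i : I) (φ : Formula P I) : Prop :=
  (∃ χ, φ = Formula.know i χ) ∨ (∃ χ, φ = Formula.neg (Formula.know i χ)) ∨
    (∃ χ, φ = Formula.kh i χ) ∨ (∃ χ, φ = Formula.neg (Formula.kh i χ))

/-- The set `Γ` is satisfied at some state of some model. -/
def SatSet (Γ : Set (Formula P I)) : Prop :=
  ∃ (M : Model P I) (s : M.W), ∀ φ ∈ Γ, Sat M s φ

theorem sat_agentFormula_congr {M : Model P I} {i : I} {s t : M.W} (h : M.sim i s t)
    {φ : Formula P I} (hφ : IsAgentFormula i φ) : Sat M s φ ↔ Sat M t φ := by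
  obtain ⟨χ, rfl⟩ | ⟨χ, rfl⟩ | ⟨χ, rfl⟩ | ⟨χ, rfl⟩ := hφ <;>
    simp only [Sat, sim_left_iff h]

theorem SatSet.not_blatant {Γ : Set (Formula P I)} (h : SatSet Γ) : ¬ Blatant Γ := by
  obtain ⟨M, s, hs⟩ := h
  rintro (hb | ⟨ψ, hψ, hn⟩)
  · exact hs _ hb
  · exact hs _ hn (hs _ hψ)

theorem sat_neg_know_of_neg_kh {M : Model P I} {i : I} {s : M.W} {ψ : Formula P I}
    (h : Sat M s (.neg (.kh i ψ))) : Sat M s (.neg (.know i ψ)) :=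
  fun hk => h (sat_kh_iff_win.2 (.base hk))

theorem SatSet.orOut {Γ : Set (Formula P I)} {φ : Formula P I} (h : SatSet Γ) (hφ : φ ∈ Γ)
    (hc : ¬ AutoChecked Γ φ) : ∃ Δ ∈ orOut Γ φ, SatSet Δ := by
  obtain ⟨M, s, hs⟩ := h
  suffices ∃ Δ ∈ ELKh.orOut Γ φ, ∀ χ ∈ Δ, Sat M s χ from
    this.imp fun Δ hΔ => ⟨hΔ.1, M, s, hΔ.2⟩
  have h1 := hs φ hφ
  rcases φ with _ | p | φ | ⟨ψ, χ⟩ | ⟨i, ψ⟩ | ⟨i, ψ⟩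
  · simp [AutoChecked] at hc
  · simp [AutoChecked] at hc
  · rcases φ with _ | p | ψ | ⟨ψ, χ⟩ | ⟨i, ψ⟩ | ⟨i, ψ⟩
    · simp [AutoChecked] at hc
    · simp [AutoChecked] at hc
    · simp only [Sat, not_not] at h1
      simpa [ELKh.orOut, h1] using hs
    · simp only [Sat, not_and] at h1
      by_cases hψ : Sat M s ψ <;> by_cases hχ : Sat M s χ <;>
        simp_all [ELKh.orOut, Sat]
    · by_cases hψ : Sat M s ψ <;> simp_all [ELKh.orOut, Sat]
    · have := sat_neg_know_of_neg_kh h1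
      simpa [ELKh.orOut, this] using hs
  · simp only [Sat] at h1
    simpa [ELKh.orOut, h1] using hs
  · have := h1 s ((M.equiv i).refl s)
    simpa [ELKh.orOut, this] using hs
  · by_cases hk : Sat M s (.know i ψ)
    · exact ⟨_, Or.inr rfl, by simpa [hk] using hs⟩
    · exact ⟨_, Or.inl rfl, by simpa [show Sat M s (.neg (.know i ψ)) from hk] using hs⟩

theorem SatSet.sigmaSet {Γ : Set (Formula P I)} {i : I} {ψ : Formula P I} (h : SatSet Γ)
    (hψ : Formula.neg (Formula.know i ψ) ∈ Γ) : SatSet (SigmaSet Γ i ψ) := by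
  obtain ⟨M, s, hs⟩ := h
  have h1 : ¬ ∀ t, M.sim i s t → Sat M t ψ := hs _ hψ
  push Not at h1
  obtain ⟨t, hst, ht⟩ := h1
  refine ⟨M, t, ?_⟩
  rintro φ (rfl | ⟨hφ, hi⟩)
  · exact ht
  · exact (sat_agentFormula_congr hst hi).1 (hs φ hφ)

theorem SatSet.know_of_kh {Γ : Set (Formula P I)} {i : I} {ψ : Formula P I} (h : SatSet Γ)
    (hψ : Formula.kh i ψ ∈ Γ) : SatSet {Formula.know i ψ} := by
  obtain ⟨M, s, hs⟩ := h
  obtain ⟨t, ht⟩ := (sat_kh_iff_win.1 (hs _ hψ)).exists_classAll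
  refine ⟨M, t, ?_⟩
  rintro φ rfl
  exact ht

theorem SatSet.know_neg_kh {Γ : Set (Formula P I)} {i : I} {ψ χ : Formula P I} (h : SatSet Γ)
    (hψ : Formula.kh i ψ ∈ Γ) (hχ : Formula.neg (Formula.kh i χ) ∈ Γ) :
    SatSet {Formula.know i ψ, Formula.neg (Formula.kh i χ)} := by
  obtain ⟨M, s, hs⟩ := h
  by_contra hno
  refine hs _ hχ (sat_kh_iff_win.2 ((sat_kh_iff_win.1 (hs _ hψ)).of_subset fun t ht => ?_))
  by_contra hw
  refine hno ⟨M, t, ?_⟩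
  rintro φ (rfl | rfl)
  · exact ht
  · exact fun hk => hw (sat_kh_iff_win.1 hk)

variable {T}

theorem IsTableau.blockedBy_eq_none {φ0 : Formula P I} (hT : IsTableau φ0 T) {n m : T.Node}
    (h : T.parent m = some n) : T.blockedBy n = none := by
  by_contra hb
  exact hT.blocked_leaf n hb m h

theorem IsTableau.not_blatant {φ0 : Formula P I} (hT : IsTableau φ0 T) {n m : T.Node}
    (h : T.parent m = some n) : ¬ Blatant (T.label n) :=
  fun hb => hT.blatant_leaf n hb m h

theorem IsTableau.not_tableauClosed_of_sat {φ0 : Formula P I} (hT : IsTableau φ0 T)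
    {M : Model P I} {s : M.W} (hs : Sat M s φ0) : ¬ TableauClosed T := by
  intro hcl
  let S : Set T.Node :=
    {n | ∀ m, Relation.ReflTransGen (fun a b => T.parent b = some a) m n → SatSet (T.label m)}
  have hself : ∀ n ∈ S, SatSet (T.label n) := fun n hn => hn n .refl
  have hchild : ∀ n ∈ S, ∀ m, T.parent m = some n → SatSet (T.label m) → m ∈ S := by
    intro n hn m hm hsat k hk
    obtain rfl | ⟨l, hkl, hl⟩ := hk.cases_tail
    · exact hsat
    · rw [hm] at hl
      obtain rfl := Option.some.inj hl
      exact hn k hkl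
  have hS : CompleteSubtree T S := by
    refine ⟨⟨fun m hm => ?_, fun n hn m hm k hk => hn k (hk.tail hm)⟩, ?_, ?_⟩
    · obtain rfl | ⟨l, -, hl⟩ := hm.cases_tail
      · rw [hT.root_label]
        exact ⟨M, s, by rintro φ rfl; exact hs⟩
      · rw [T.parent_root] at hl
        cases hl
    · intro n hn _ hsat m hm
      have hm : T.parent m = some n := hm
      refine hchild n hn m hm ?_
      have hn' := hself n hn
      obtain ⟨i, ψ, -, hψ, hl, -⟩ | ⟨i, ψ, -, hψ, -, hl⟩ | ⟨i, ψ, χ, -, hχ, hψ, -, hl⟩ :=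
        (hT.and_node n (hT.not_blatant hm) (hT.blockedBy_eq_none hm) hsat).2.2.2 m hm
      · exact hl ▸ hn'.sigmaSet hψ
      · exact hl ▸ hn'.know_of_kh hψ
      · exact hl ▸ hn'.know_neg_kh hψ hχ
    · intro n hn hleaf hsat
      obtain ⟨m, hm⟩ : ∃ m, T.parent m = some n := by simpa [IsLeaf] using hleaf
      obtain ⟨φ, hφ, hc, hex, -⟩ :=
        hT.or_node n (hT.not_blatant hm) (hT.blockedBy_eq_none hm) hsat
      obtain ⟨Δ, hΔ, hΔs⟩ := (hself n hn).orOut hφ hc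
      obtain ⟨k, hk, -, rfl, -⟩ := hex Δ hΔ
      exact ⟨k, hk, hchild n hn k hk hΔs⟩
  obtain ⟨n, hn, hb⟩ := hcl S hS
  exact (hself n hn).not_blatant hb

/-! ### Sets closed under expansion -/

/-- The formulas that the expansion rules derive, up to negation, from a formula. -/
def components : Formula P I → Set (Formula P I)
  | .bot => ∅
  | .atom _ => ∅
  | .neg ψ => {ψ}
  | .and ψ χ => {ψ, χ}
  | .know _ ψ => {ψ}
  | .kh i ψ => {Formula.know i ψ}

/-- The set `C` contains the components of its members. -/
def ComponentClosed (C : Set (Formula P I)) : Prop := ∀ φ ∈ C, components φ ⊆ C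

/-- The members of `C` and their negations. -/
def withNeg (C : Set (Formula P I)) : Set (Formula P I) := C ∪ Formula.neg '' C

theorem ComponentClosed.mem_of_neg_mem {C : Set (Formula P I)} (hC : ComponentClosed C)
    {ψ : Formula P I} (h : Formula.neg ψ ∈ withNeg C) : ψ ∈ C := by
  obtain h | ⟨χ, hχ, h⟩ := h
  · exact hC _ h rfl
  · cases h
    exact hχ

theorem mem_withNeg {C : Set (Formula P I)} {ψ : Formula P I} (h : ψ ∈ C) : ψ ∈ withNeg C :=
  .inl h

theorem neg_mem_withNeg {C : Set (Formula P I)} {ψ : Formula P I} (h : ψ ∈ C) :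
    Formula.neg ψ ∈ withNeg C :=
  .inr ⟨ψ, h, rfl⟩

theorem ComponentClosed.components_subset {C : Set (Formula P I)} (hC : ComponentClosed C)
    {φ : Formula P I} (h : φ ∈ withNeg C) : components φ ⊆ C := by
  obtain h | ⟨ψ, hψ, rfl⟩ := h
  · exact hC φ h
  · rintro _ rfl
    exact hψ

theorem ComponentClosed.orOut_subset {C : Set (Formula P I)} (hC : ComponentClosed C)
    {φ : Formula P I} (hφ : φ ∈ withNeg C) {Γ Δ : Set (Formula P I)} (hΓ : Γ ⊆ withNeg C)
    (hΔ : Δ ∈ orOut Γ φ) : Δ ⊆ withNeg C := by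
  have hc := hC.components_subset hφ
  rcases φ with _ | p | φ | ⟨ψ, χ⟩ | ⟨i, ψ⟩ | ⟨i, ψ⟩
  · simp [orOut] at hΔ
  · simp [orOut] at hΔ
  · have hφ' : φ ∈ C := hc rfl
    have hc' := hC _ hφ'
    rcases φ with _ | p | ψ | ⟨ψ, χ⟩ | ⟨i, ψ⟩ | ⟨i, ψ⟩ <;>
      simp only [orOut, components, Set.insert_subset_iff, Set.singleton_subset_iff,
        Set.mem_insert_iff, Set.mem_singleton_iff, Set.mem_empty_iff_false] at hΔ hc'
    · obtain rfl := hΔ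
      simp [Set.insert_subset_iff, hΓ, mem_withNeg hc']
    · obtain rfl | rfl | rfl := hΔ <;>
        simp [Set.insert_subset_iff, hΓ, mem_withNeg hc'.1, mem_withNeg hc'.2,
          neg_mem_withNeg hc'.1, neg_mem_withNeg hc'.2]
    · obtain rfl | rfl := hΔ <;>
        simp [Set.insert_subset_iff, hΓ, mem_withNeg hc', neg_mem_withNeg hc']
    · obtain rfl := hΔ
      simp [Set.insert_subset_iff, hΓ, neg_mem_withNeg hc']
  all_goals
    simp only [orOut, components, Set.insert_subset_iff, Set.singleton_subset_iff,
      Set.mem_insert_iff, Set.mem_singleton_iff] at hΔ hc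
  · obtain rfl := hΔ
    simp [Set.insert_subset_iff, hΓ, mem_withNeg hc.1, mem_withNeg hc.2]
  · obtain rfl := hΔ
    simp [Set.insert_subset_iff, hΓ, mem_withNeg hc]
  · obtain rfl | rfl := hΔ <;>
      simp [Set.insert_subset_iff, hΓ, mem_withNeg hc, neg_mem_withNeg hc]

/-- The formulas decided by `Γ`. -/
def decided (Γ : Set (Formula P I)) : Set (Formula P I) := {φ | φ ∈ Γ ∨ Formula.neg φ ∈ Γ}

theorem Saturated.componentClosed_decided {Γ : Set (Formula P I)} (h : Saturated Γ) :
    ComponentClosed (decided Γ) := by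
  rintro φ (hφ | hφ) <;> have hc := h _ hφ <;>
    rcases φ with _ | p | φ | ⟨ψ, χ⟩ | ⟨i, ψ⟩ | ⟨i, ψ⟩ <;>
    simp only [AutoChecked, components, Set.insert_subset_iff, Set.singleton_subset_iff,
      Set.empty_subset, decided, Set.mem_ofPred_eq] at hc ⊢ <;>
    tauto

/-- The least component-closed set containing a formula. -/
def closure : Formula P I → Set (Formula P I)
  | .bot => {Formula.bot}
  | .atom p => {Formula.atom p}
  | .neg φ => insert (Formula.neg φ) (closure φ)
  | .and φ ψ => insert (Formula.and φ ψ) (closure φ ∪ closure ψ)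
  | .know i φ => insert (Formula.know i φ) (closure φ)
  | .kh i φ => insert (Formula.kh i φ) (insert (Formula.know i φ) (closure φ))

theorem self_mem_closure (φ : Formula P I) : φ ∈ closure φ := by
  cases φ <;> simp [closure]

theorem finite_closure (φ : Formula P I) : (closure φ).Finite := by
  induction φ with
  | bot => exact Set.finite_singleton _
  | atom p => exact Set.finite_singleton _
  | neg φ ih | know i φ ih => exact ih.insert _
  | kh i φ ih => exact (ih.insert _).insert _
  | and φ χ ih1 ih2 => exact (ih1.union ih2).insert _

theorem ComponentClosed.insert {C : Set (Formula P I)} (hC : ComponentClosed C)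
    {φ : Formula P I} (hφ : components φ ⊆ C) : ComponentClosed (insert φ C) := by
  rintro ψ (rfl | hψ)
  · exact hφ.trans (Set.subset_insert _ _)
  · exact (hC ψ hψ).trans (Set.subset_insert _ _)

theorem ComponentClosed.union {C D : Set (Formula P I)} (hC : ComponentClosed C)
    (hD : ComponentClosed D) : ComponentClosed (C ∪ D) := by
  rintro ψ (hψ | hψ)
  · exact (hC ψ hψ).trans Set.subset_union_left
  · exact (hD ψ hψ).trans Set.subset_union_right

theorem componentClosed_closure (φ : Formula P I) : ComponentClosed (closure φ) := by
  induction φ with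
  | bot => rintro _ rfl; exact Set.empty_subset _
  | atom p => rintro _ rfl; exact Set.empty_subset _
  | neg φ ih | know i φ ih => exact ih.insert (by simp [components, self_mem_closure])
  | kh i φ ih =>
    exact (ih.insert (by simp [components, self_mem_closure])).insert (by simp [components])
  | and φ χ ih1 ih2 =>
    exact (ih1.union ih2).insert
      (by simp [components, Set.insert_subset_iff, self_mem_closure])

theorem finite_withNeg_closure (φ : Formula P I) : (withNeg (closure φ)).Finite :=
  (finite_closure φ).union ((finite_closure φ).image _)

theorem IsTableau.label_subset {φ0 : Formula P I} (hT : IsTableau φ0 T) (n : T.Node) :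
    T.label n ⊆ withNeg (closure φ0) := by
  have hC := componentClosed_closure φ0
  induction hd : T.depth n generalizing n with
  | zero =>
    cases hp : T.parent n with
    | none =>
      rw [T.eq_root n hp, hT.root_label]
      rintro _ rfl
      exact mem_withNeg (self_mem_closure _)
    | some m => simp [T.depth_parent n m hp] at hd
  | succ d ih =>
    cases hp : T.parent n with
    | none => rw [T.eq_root n hp, T.depth_root] at hd; cases hd
    | some m =>
      have hm : T.label m ⊆ withNeg (closure φ0) :=
        ih m (by rw [T.depth_parent n m hp] at hd; omega)
      by_cases hsat : Saturated (T.label m)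
      · obtain ⟨i, ψ, -, hψ, hl, -⟩ | ⟨i, ψ, -, hψ, -, hl⟩ | ⟨i, ψ, χ, -, hχ, hψ, -, hl⟩ :=
          (hT.and_node m (hT.not_blatant hp) (hT.blockedBy_eq_none hp) hsat).2.2.2 n hp
        · rw [hl]
          rintro φ (rfl | hφ)
          · exact neg_mem_withNeg (hC _ (hC.mem_of_neg_mem (hm hψ)) rfl)
          · exact hm hφ.1
        · rw [hl]
          rintro _ rfl
          exact mem_withNeg (hC.components_subset (hm hψ) rfl)
        · rw [hl]
          rintro _ (rfl | rfl)
          · exact mem_withNeg (hC.components_subset (hm hψ) rfl)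
          · exact hm hχ
      · obtain ⟨φ, hφ, -, -, hch⟩ :=
          hT.or_node m (hT.not_blatant hp) (hT.blockedBy_eq_none hp) hsat
        exact hC.orOut_subset (hm hφ) hm (hch n hp).2.1

theorem orOut_nonempty {Γ : Set (Formula P I)} {φ : Formula P I} (hc : ¬ AutoChecked Γ φ) :
    (orOut Γ φ).Nonempty := by
  rcases φ with _ | p | φ | ⟨ψ, χ⟩ | ⟨i, ψ⟩ | ⟨i, ψ⟩
  case neg => rcases φ with _ | p | ψ | ⟨ψ, χ⟩ | ⟨i, ψ⟩ | ⟨i, ψ⟩ <;> simp_all [AutoChecked, orOut]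
  all_goals simp_all [AutoChecked, orOut]

theorem ssubset_of_mem_orOut {Γ Δ : Set (Formula P I)} {φ : Formula P I}
    (hc : ¬ AutoChecked Γ φ) (hΔ : Δ ∈ orOut Γ φ) : Γ ⊂ Δ := by
  suffices Γ ⊆ Δ ∧ AutoChecked Δ φ from
    this.1.ssubset_of_ne fun h => hc (h ▸ this.2)
  rcases φ with _ | p | φ | ⟨ψ, χ⟩ | ⟨i, ψ⟩ | ⟨i, ψ⟩
  case neg =>
    rcases φ with _ | p | ψ | ⟨ψ, χ⟩ | ⟨i, ψ⟩ | ⟨i, ψ⟩ <;>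
      simp only [orOut, Set.mem_insert_iff, Set.mem_singleton_iff,
        Set.mem_empty_iff_false] at hΔ
    case and =>
      obtain rfl | rfl | rfl := hΔ <;> refine ⟨fun x hx => ?_, ?_⟩ <;> simp_all [AutoChecked]
    case know =>
      obtain rfl | rfl := hΔ <;> refine ⟨fun x hx => ?_, ?_⟩ <;> simp_all [AutoChecked]
    all_goals
      obtain rfl := hΔ
      refine ⟨fun x hx => ?_, ?_⟩ <;> simp_all [AutoChecked]
  all_goals
    simp only [orOut, Set.mem_insert_iff, Set.mem_singleton_iff, Set.mem_empty_iff_false] at hΔ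
  case kh => obtain rfl | rfl := hΔ <;> refine ⟨fun x hx => ?_, ?_⟩ <;> simp_all [AutoChecked]
  all_goals
    obtain rfl := hΔ
    refine ⟨fun x hx => ?_, ?_⟩ <;> simp_all [AutoChecked]

/-! ### Completeness -/

theorem IsTableau.exists_saturated {φ0 : Formula P I} (hT : IsTableau φ0 T) {S : Set T.Node}
    (hS : CompleteSubtree T S) (hopen : ¬ ClosedSubtree T S) {m : T.Node} (hm : m ∈ S) :
    ∃ n ∈ S, T.blockedBy n = none ∧ Saturated (T.label n) ∧ T.label m ⊆ T.label n ∧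
      ∀ C, ComponentClosed C → T.label m ⊆ withNeg C → T.label n ⊆ withNeg C := by
  wlog hb : T.blockedBy m = none generalizing m
  · obtain ⟨m', hm'⟩ := Option.ne_none_iff_exists'.1 hb
    obtain ⟨hanc, hl⟩ := hT.blocked_spec m m' hm'
    have hmem : m' ∈ S := by
      clear hm' hl hb
      induction hanc with
      | single h => exact hS.1.2 _ hm _ h
      | tail _ h ih => exact ih (hS.1.2 _ hm _ h)
    obtain ⟨k, hk, -⟩ := Relation.TransGen.head'_iff.1 hanc
    rw [← hl]
    exact this hmem (hT.blockedBy_eq_none hk)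
  induction hN : (withNeg (closure φ0) \ T.label m).ncard using Nat.strong_induction_on
    generalizing m with
  | _ N ih =>
    by_cases hsat : Saturated (T.label m)
    · exact ⟨m, hm, hb, hsat, subset_rfl, fun _ _ h => h⟩
    obtain ⟨φ, hφ, hc, hex, hch⟩ := hT.or_node m (fun h => hopen ⟨m, hm, h⟩) hb hsat
    obtain ⟨Δ, hΔ⟩ := orOut_nonempty hc
    obtain ⟨k, hk, -⟩ := hex Δ hΔ
    obtain ⟨l, hl, hlS⟩ := hS.2.2 m hm (fun h => h k hk) hsat
    obtain ⟨-, hlab, hlb⟩ := hch l hl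
    have hss := ssubset_of_mem_orOut hc hlab
    have hlt : (withNeg (closure φ0) \ T.label l).ncard < N := by
      rw [← hN]
      refine Set.ncard_lt_ncard ?_ (finite_withNeg_closure φ0).sdiff
      obtain ⟨x, hx, hxm⟩ := Set.exists_of_ssubset hss
      exact (Set.ssubset_iff_of_subset (Set.sdiff_subset_sdiff_right hss.subset)).2
        ⟨x, ⟨hT.label_subset l hx, hxm⟩, fun h => h.2 hx⟩
    obtain ⟨n, hn, hnb, hns, hsub, hcl⟩ := ih _ hlt hlS hlb rfl
    exact ⟨n, hn, hnb, hns, hss.subset.trans hsub,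
      fun C hC h => hcl C hC (hC.orOut_subset (h hφ) h hlab)⟩

/-- The `i`-formulas of `Γ`, which `∼ᵢ` preserves. -/
def agentPart (i : I) (Γ : Set (Formula P I)) : Set (Formula P I) :=
  {φ ∈ Γ | IsAgentFormula i φ}

/-- A family of saturated labels with witnesses for all modal requirements. -/
structure HintikkaFamily (H : Set (Set (Formula P I))) : Prop where
  not_blatant : ∀ Γ ∈ H, ¬ Blatant Γ
  saturated : ∀ Γ ∈ H, Saturated Γ
  neg_know : ∀ Γ ∈ H, ∀ i ψ, Formula.neg (Formula.know i ψ) ∈ Γ →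
    ∃ Δ ∈ H, Formula.neg ψ ∈ Δ ∧ agentPart i Γ = agentPart i Δ
  kh : ∀ Γ ∈ H, ∀ i ψ, Formula.kh i ψ ∈ Γ → Formula.neg (Formula.know i ψ) ∈ Γ →
    ∃ Δ ∈ H, Formula.know i ψ ∈ Δ
  neg_kh : ∀ Γ ∈ H, ∀ i ψ χ, Formula.neg (Formula.kh i χ) ∈ Γ → Formula.kh i ψ ∈ Γ →
    Formula.neg (Formula.know i ψ) ∈ Γ →
    ∃ Δ ∈ H, Formula.know i ψ ∈ Δ ∧ Formula.neg (Formula.kh i χ) ∈ Δ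

theorem agentPart_eq_of_subset {Γ Δ : Set (Formula P I)} {i : I} (hΓ : Saturated Γ)
    (hΔ : ¬ Blatant Δ) (h : agentPart i Γ ⊆ Δ) (hdec : Δ ⊆ withNeg (decided Γ)) :
    agentPart i Γ = agentPart i Δ := by
  refine Set.Subset.antisymm (fun φ hφ => ⟨h hφ, hφ.2⟩) fun φ hφ => ⟨?_, hφ.2⟩
  have key : ∀ ψ, IsAgentFormula i ψ → IsAgentFormula i (.neg ψ) →
      (φ = ψ ∨ φ = .neg ψ) → φ ∈ Γ := by
    rintro ψ hi hin (rfl | rfl)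
    · obtain (h' | h') | ⟨χ, -, rfl⟩ := hdec hφ.1
      · exact h'
      · exact absurd (.inr ⟨_, hφ.1, h ⟨h', hin⟩⟩) hΔ
      · simp [IsAgentFormula] at hi hin
    · obtain h' | h' := hΓ.componentClosed_decided.mem_of_neg_mem (hdec hφ.1)
      · exact absurd (.inr ⟨_, h ⟨h', hi⟩, hφ.1⟩) hΔ
      · exact h'
  obtain ⟨χ, rfl⟩ | ⟨χ, rfl⟩ | ⟨χ, rfl⟩ | ⟨χ, rfl⟩ := hφ.2
  · exact key (.know i χ) (by simp [IsAgentFormula]) (by simp [IsAgentFormula]) (.inl rfl)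
  · exact key (.know i χ) (by simp [IsAgentFormula]) (by simp [IsAgentFormula]) (.inr rfl)
  · exact key (.kh i χ) (by simp [IsAgentFormula]) (by simp [IsAgentFormula]) (.inl rfl)
  · exact key (.kh i χ) (by simp [IsAgentFormula]) (by simp [IsAgentFormula]) (.inr rfl)

theorem IAnc.mem {S : Set T.Node} (hS : IsSubtree T S) {i : I} {m n : T.Node}
    (h : IAnc T i m n) (hn : n ∈ S) : m ∈ S := by
  induction h with
  | single hp _ => exact hS.2 _ hn _ hp
  | cons hp _ _ ih => exact ih (hS.2 _ hn _ hp)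

theorem IsTableau.hintikkaFamily {φ0 : Formula P I} (hT : IsTableau φ0 T) {S : Set T.Node}
    (hS : CompleteSubtree T S) (hopen : ¬ ClosedSubtree T S) :
    HintikkaFamily
      {Γ | ∃ n ∈ S, T.blockedBy n = none ∧ Saturated (T.label n) ∧ T.label n = Γ} := by
  have hnb : ∀ n ∈ S, ¬ Blatant (T.label n) := fun n hn h => hopen ⟨n, hn, h⟩
  have hand : ∀ n ∈ S, Saturated (T.label n) → ∀ m, T.parent m = some n → m ∈ S :=
    fun n hn hs m hm => hS.2.1 n hn (fun h => h m hm) hs m hm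
  constructor
  · rintro _ ⟨n, hn, -, -, rfl⟩
    exact hnb n hn
  · rintro _ ⟨n, -, -, hs, rfl⟩
    exact hs
  · rintro _ ⟨n, hn, hb, hs, rfl⟩ i ψ hψ
    obtain ⟨m, hm, hl⟩ : ∃ m ∈ S, T.label m = SigmaSet (T.label n) i ψ := by
      by_cases hanc : ∃ n', IAnc T i n' n ∧ T.label n' = SigmaSet (T.label n) i ψ
      · obtain ⟨n', hn', hl⟩ := hanc
        exact ⟨n', hn'.mem hS.1 hn, hl⟩
      · obtain ⟨m, hm, -, hl, -⟩ := (hT.and_node n (hnb n hn) hb hs).1 i ψ hψ hanc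
        exact ⟨m, hand n hn hs m hm, hl⟩
    obtain ⟨k, hk, hkb, hks, hsub, hcl⟩ := hT.exists_saturated hS hopen hm
    rw [hl] at hsub hcl
    have hpart : agentPart i (T.label n) ⊆ T.label k := fun φ hφ => hsub (.inr hφ)
    refine ⟨_, ⟨k, hk, hkb, hks, rfl⟩, hsub (.inl rfl),
      agentPart_eq_of_subset hs (hnb k hk) hpart (hcl _ hs.componentClosed_decided ?_)⟩
    rintro φ (rfl | hφ)
    · exact neg_mem_withNeg (hs _ hψ).symm
    · exact .inl (.inl hφ.1)
  · rintro _ ⟨n, hn, hb, hs, rfl⟩ i ψ hψ hk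
    obtain ⟨m, hm, -, hl, -⟩ := (hT.and_node n (hnb n hn) hb hs).2.1 i ψ hψ hk
    obtain ⟨k, hk, hkb, hks, hsub, -⟩ := hT.exists_saturated hS hopen (hand n hn hs m hm)
    exact ⟨_, ⟨k, hk, hkb, hks, rfl⟩, hsub (by simp [hl])⟩
  · rintro _ ⟨n, hn, hb, hs, rfl⟩ i ψ χ hχ hψ hk
    obtain ⟨m, hm, -, hl, -⟩ := (hT.and_node n (hnb n hn) hb hs).2.2.1 i ψ χ hχ hψ hk
    obtain ⟨k, hk, hkb, hks, hsub, -⟩ := hT.exists_saturated hS hopen (hand n hn hs m hm)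
    exact ⟨_, ⟨k, hk, hkb, hks, rfl⟩, hsub (by simp [hl]), hsub (by simp [hl])⟩

/-- The model whose states are the members of a family of labels. -/
def familyModel (H : Set (Set (Formula P I))) : Model P I where
  W := H
  sim i Γ Δ := agentPart i Γ.1 = agentPart i Δ.1
  equiv _ := ⟨fun _ => rfl, Eq.symm, Eq.trans⟩
  Act _ := Formula P I
  R i ψ Γ Δ := Formula.kh i ψ ∈ Γ.1 ∧ Formula.neg (Formula.know i ψ) ∈ Γ.1 ∧
    Formula.know i ψ ∈ Δ.1
  V Γ p := Formula.atom p ∈ Γ.1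

section FamilyModel

variable {H : Set (Set (Formula P I))}

theorem mem_iff_of_sim {i : I} {Γ Δ : (familyModel H).W} (h : (familyModel H).sim i Γ Δ)
    {φ : Formula P I} (hφ : IsAgentFormula i φ) : φ ∈ Γ.1 ↔ φ ∈ Δ.1 := by
  have h' : agentPart i Γ.1 = agentPart i Δ.1 := h
  have := Set.ext_iff.1 h' φ
  simpa [agentPart, hφ] using this

theorem isAgentFormula_know (i : I) (ψ : Formula P I) : IsAgentFormula i (.know i ψ) :=
  .inl ⟨ψ, rfl⟩

theorem isAgentFormula_neg_know (i : I) (ψ : Formula P I) :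
    IsAgentFormula i (.neg (.know i ψ)) :=
  .inr (.inl ⟨ψ, rfl⟩)

theorem isAgentFormula_kh (i : I) (ψ : Formula P I) : IsAgentFormula i (.kh i ψ) :=
  .inr (.inr (.inl ⟨ψ, rfl⟩))

theorem isAgentFormula_neg_kh (i : I) (ψ : Formula P I) : IsAgentFormula i (.neg (.kh i ψ)) :=
  .inr (.inr (.inr ⟨ψ, rfl⟩))

theorem HintikkaFamily.classAll_of_know_mem (hH : HintikkaFamily H) {i : I} {ψ : Formula P I}
    (ih : ∀ Δ : (familyModel H).W, ψ ∈ Δ.1 → Sat (familyModel H) Δ ψ)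
    {Γ : (familyModel H).W} (h : Formula.know i ψ ∈ Γ.1) :
    ClassAll (familyModel H) i (fun Δ => Sat (familyModel H) Δ ψ) Γ := fun Δ hΔ =>
  ih Δ (hH.saturated _ Δ.2 _ ((mem_iff_of_sim hΔ (isAgentFormula_know i ψ)).1 h))

theorem HintikkaFamily.not_classAll_of_neg_know_mem (hH : HintikkaFamily H) {i : I}
    {ψ : Formula P I}
    (ih : ∀ Δ : (familyModel H).W, Formula.neg ψ ∈ Δ.1 → ¬ Sat (familyModel H) Δ ψ)
    {Γ : (familyModel H).W} (h : Formula.neg (Formula.know i ψ) ∈ Γ.1) :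
    ¬ ClassAll (familyModel H) i (fun Δ => Sat (familyModel H) Δ ψ) Γ := by
  obtain ⟨Δ, hΔ, hψ, hsim⟩ := hH.neg_know _ Γ.2 i ψ h
  exact fun hall => ih ⟨Δ, hΔ⟩ hψ (hall ⟨Δ, hΔ⟩ hsim)

theorem HintikkaFamily.win_of_kh_mem (hH : HintikkaFamily H) {i : I} {ψ : Formula P I}
    (ih : ∀ Δ : (familyModel H).W, ψ ∈ Δ.1 → Sat (familyModel H) Δ ψ)
    {Γ : (familyModel H).W} (h : Formula.kh i ψ ∈ Γ.1) :
    Win (familyModel H) i (fun Δ => Sat (familyModel H) Δ ψ) Γ := by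
  obtain hn | hk := hH.saturated _ Γ.2 _ h
  · refine .step (M := familyModel H) (i := i) ψ (fun Δ hΔ => ?_) ?_
    · have h' := (mem_iff_of_sim hΔ (isAgentFormula_kh i ψ)).1 h
      have hn' := (mem_iff_of_sim hΔ (isAgentFormula_neg_know i ψ)).1 hn
      obtain ⟨Θ, hΘ, hk⟩ := hH.kh _ Δ.2 i ψ h' hn'
      exact ⟨⟨Θ, hΘ⟩, h', hn', hk⟩
    · rintro Δ ⟨Γ', Δ', -, hΔ, -, -, hk⟩
      exact .base (hH.classAll_of_know_mem ih
        ((mem_iff_of_sim hΔ (isAgentFormula_know i ψ)).2 hk))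
  · exact .base (hH.classAll_of_know_mem ih hk)

theorem HintikkaFamily.not_win_of_neg_kh_mem (hH : HintikkaFamily H) {i : I} {χ : Formula P I}
    (ih : ∀ Δ : (familyModel H).W, Formula.neg χ ∈ Δ.1 → ¬ Sat (familyModel H) Δ χ)
    {Γ : (familyModel H).W} (h : Formula.neg (Formula.kh i χ) ∈ Γ.1) :
    ¬ Win (familyModel H) i (fun Δ => Sat (familyModel H) Δ χ) Γ := by
  intro hw
  induction hw with
  | @base Γ hall => exact hH.not_classAll_of_neg_know_mem ih (hH.saturated _ Γ.2 _ h) hall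
  | @step Γ ψ he _ ihw =>
    obtain ⟨_, hkh, hn, -⟩ := he Γ rfl
    obtain ⟨Δ, hΔ, hk, hχ⟩ := hH.neg_kh _ Γ.2 i ψ χ h hkh hn
    exact ihw ⟨Δ, hΔ⟩ ⟨Γ, ⟨Δ, hΔ⟩, rfl, rfl, hkh, hn, hk⟩ hχ

theorem HintikkaFamily.truth (hH : HintikkaFamily H) (φ : Formula P I)
    (Γ : (familyModel H).W) :
    (φ ∈ Γ.1 → Sat (familyModel H) Γ φ) ∧
      (Formula.neg φ ∈ Γ.1 → ¬ Sat (familyModel H) Γ φ) := by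
  induction φ generalizing Γ with
  | bot => exact ⟨fun h => hH.not_blatant _ Γ.2 (.inl h), fun _ h => h⟩
  | atom p => exact ⟨fun h => h, fun h h' => hH.not_blatant _ Γ.2 (.inr ⟨_, h', h⟩)⟩
  | neg φ ih =>
    exact ⟨(ih Γ).2, fun h => not_not_intro ((ih Γ).1 (hH.saturated _ Γ.2 _ h))⟩
  | and φ ψ ih1 ih2 =>
    refine ⟨fun h => ?_, fun h hs => ?_⟩
    · have := hH.saturated _ Γ.2 _ h
      exact ⟨(ih1 Γ).1 this.1, (ih2 Γ).1 this.2⟩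
    · obtain h | h | h := hH.saturated _ Γ.2 _ h
      · exact (ih1 Γ).2 h.1 hs.1
      · exact (ih1 Γ).2 h.1 hs.1
      · exact (ih2 Γ).2 h.2 hs.2
  | know i φ ih =>
    exact ⟨hH.classAll_of_know_mem fun Δ => (ih Δ).1,
      hH.not_classAll_of_neg_know_mem fun Δ => (ih Δ).2⟩
  | kh i φ ih =>
    rw [sat_kh_iff_win]
    exact ⟨hH.win_of_kh_mem fun Δ => (ih Δ).1, hH.not_win_of_neg_kh_mem fun Δ => (ih Δ).2⟩

end FamilyModel

theorem IsTableau.exists_sat_of_not_tableauClosed {φ0 : Formula P I} (hT : IsTableau φ0 T)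
    (h : ¬ TableauClosed T) : ∃ (M : Model P I) (s : M.W), Sat M s φ0 := by
  simp only [TableauClosed, not_forall] at h
  obtain ⟨S, hS, hopen⟩ := h
  obtain ⟨n, hn, hb, hs, hsub, -⟩ := hT.exists_saturated hS hopen hS.1.1
  rw [hT.root_label, Set.singleton_subset_iff] at hsub
  have hmem : T.label n ∈
      {Γ | ∃ n ∈ S, T.blockedBy n = none ∧ Saturated (T.label n) ∧ T.label n = Γ} :=
    ⟨n, hn, hb, hs, rfl⟩
  exact ⟨familyModel _, ⟨T.label n, hmem⟩,
    ((hT.hintikkaFamily hS hopen).truth φ0 ⟨T.label n, hmem⟩).1 hsub⟩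

/-- `φ₀` is satisfiable iff the tableau for `φ₀` is not closed. -/
theorem satisfiable_iff_tableau_not_closed {P I : Type} (hI : ∃ i j : I, i ≠ j)
    (φ0 : Formula P I) (T : LTree P I) (hT : IsTableau φ0 T) :
    (∃ (M : Model P I) (s : M.W), Sat M s φ0) ↔ ¬ TableauClosed T := by
  exact ⟨fun ⟨_, _, hs⟩ => hT.not_tableauClosed_of_sat hs, hT.exists_sat_of_not_tableauClosed⟩

end ELKh
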